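/- Let G : Finset(ℝ^d) → ℝ and let η be a finite subset of ℝ^d. Assume that for every ξ ⊆ η and every pair of distinct x₁, x₂ ∈ η, the functions (y₁,y₂) ↦ c(x₁,x₂,y₁,y₂)·G(ξ ∪ {y₁}), (y₁,y₂) ↦ c(x₁,x₂,y₁,y₂)·G(ξ ∪ {y₂}), (y₁,y₂) ↦ c(x₁,x₂,y₁,y₂)·G(ξ ∪ {y₁,y₂}) and (y₁,y₂) ↦ c(x₁,x₂,y₁,y₂) are Lebesgue-integrable on ℝ^d × ℝ^d. Define, for F : Finset(ℝ^d) → ℝ, (LF)(γ) := Σ_{{x₁,x₂}⊆γ} ∫∫ c(x₁,x₂,y₁,y₂)·[F((γ∖{x₁,x₂}) ∪ {y₁,y₂}) − F(γ)] dy₁dy₂; (KG)(γ) := Σ_{ξ⊆γ} G(ξ); (K⁻¹F)(γ) := Σ_{ξ⊆γ} (−1)^{|γ∖ξ|} F(ξ). Then (K⁻¹ L K G)(η) = (L₀G)(η) + (WG)(η), where (L₀G)(η) := Σ_{{x₁,x₂}⊆η} ∫∫ c(x₁,x₂,y₁,y₂)·[G((η∖{x₁,x₂}) ∪ {y₁,y₂})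 − G(η)] dy₁dy₂ and (WG)(η) := Σ_{x₂∈η} Σ_{x₁∈η∖{x₂}} ∫ c̃(x₁,x₂,y)·[G(((η∖{x₂})∖{x₁}) ∪ {y}) − G(η∖{x₂})] dy. -/

import Mathlib

open MeasureTheory

noncomputable section

/-- `ℝ^d` -/
abbrev Rd (d : ℕ) : Type := Fin d → ℝ

/-- The K-transform on finite configurations: `(KG)(γ) = Σ_{ξ ⊆ γ} G(ξ)`. -/
def Ktr {α : Type*} [DecidableEq α] (G : Finset α → ℝ) (γ : Finset α) : ℝ :=
  ∑ ξ ∈ γ.powerset, G ξ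

/-- The inverse K-transform: `(K⁻¹F)(γ) = Σ_{ξ ⊆ γ} (−1)^{|γ∖ξ|} F(ξ)`. -/
def Kinv {α : Type*} [DecidableEq α] (F : Finset α → ℝ) (γ : Finset α) : ℝ :=
  ∑ ξ ∈ γ.powerset, (-1 : ℝ) ^ (γ \ ξ).card * F ξ

/-- `c̃(x₁,x₂,y₁) := ∫ c(x₁,x₂,y₁,y₂) dy₂`. -/
def ctil (d : ℕ) (c : Rd d → Rd d → Rd d → Rd d → ℝ) (x₁ x₂ y₁ : Rd d) : ℝ :=
  ∫ y₂ : Rd d, c x₁ x₂ y₁ y₂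

/-- The binary-jump generator on functions of finite configurations:
`(LF)(γ) = Σ_{{x₁,x₂}⊆γ} ∫∫ c(x₁,x₂,y₁,y₂)·[F((γ∖{x₁,x₂})∪{y₁,y₂}) − F(γ)] dy₁dy₂`
(the unordered-pair sum is written as half the ordered-pair sum, using the symmetry
of `c` in its first two arguments). -/
def Lgen (d : ℕ) (c : Rd d → Rd d → Rd d → Rd d → ℝ)
    (F : Finset (Rd d) → ℝ) (γ : Finset (Rd d)) : ℝ :=
  (1 / 2 : ℝ) * ∑ x₁ ∈ γ, ∑ x₂ ∈ γ.erase x₁,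
    ∫ y : Rd d × Rd d, c x₁ x₂ y.1 y.2 *
      (F ((γ \ {x₁, x₂}) ∪ {y.1, y.2}) - F γ)

/-- `(WG)(η) = Σ_{x₂∈η} Σ_{x₁∈η∖{x₂}} ∫ c̃(x₁,x₂,y)·[G(((η∖{x₂})∖{x₁})∪{y}) − G(η∖{x₂})] dy`. -/
def Wgen (d : ℕ) (c : Rd d → Rd d → Rd d → Rd d → ℝ)
    (G : Finset (Rd d) → ℝ) (η : Finset (Rd d)) : ℝ :=
  ∑ x₂ ∈ η, ∑ x₁ ∈ η.erase x₂,
    ∫ y : Rd d, ctil d c x₁ x₂ y *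
      (G (((η \ {x₂}) \ {x₁}) ∪ {y}) - G (η \ {x₂}))

/-!
For `y₁ ≠ y₂` outside `δ`, splitting the subsets of `δ ∪ {y₁, y₂}` by their trace on `{y₁, y₂}`
writes `(KG)(δ ∪ {y₁, y₂})` as `K`, evaluated at `δ`, of the four-term sum
`G ξ + G (ξ ∪ {y₁}) + G (ξ ∪ {y₂}) + G (ξ ∪ {y₁, y₂})`. Since points are null sets, this holds for
almost every `(y₁, y₂)`. In the increment of `KG` along a jump `{x₁, x₂} → {y₁, y₂}` the term `G ξ`
cancels, the last term gives the jump of the pair, and the two middle terms give jumps of a single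
point, whose rate is a marginal of the pair rate by Fubini's theorem. Summing over pairs yields
`L (KG) = K (L₀ G + W G)`, and `K⁻¹` inverts `K`.
-/

section KTransform

variable {α : Type*} [DecidableEq α]

lemma Ktr_insert (F : Finset α → ℝ) {a : α} {s : Finset α} (ha : a ∉ s) :
    Ktr F (insert a s) = Ktr F s + Ktr (fun γ => F (insert a γ)) s :=
  Finset.sum_powerset_insert ha F

lemma Ktr_add (F F' : Finset α → ℝ) (s : Finset α) :
    Ktr (fun γ => F γ + F' γ) s = Ktr F s + Ktr F' s :=
  Finset.sum_add_distrib

lemma Ktr_const_mul (r : ℝ) (F : Finset α → ℝ) (s : Finset α) :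
    Ktr (fun γ => r * F γ) s = r * Ktr F s :=
  (Finset.mul_sum ..).symm

lemma Ktr_union_pair (F : Finset α → ℝ) {s : Finset α} {a b : α} (ha : a ∉ s) (hb : b ∉ s)
    (hab : a ≠ b) :
    Ktr F (s ∪ {a, b}) =
      Ktr (fun ξ => F ξ + F (ξ ∪ {a}) + F (ξ ∪ {b}) + F (ξ ∪ {a, b})) s := by
  have union_single (ξ : Finset α) (x : α) : ξ ∪ {x} = insert x ξ := by
    rw [Finset.union_comm, ← Finset.insert_eq]
  have union_pair (ξ : Finset α) : ξ ∪ {a, b} = insert a (insert b ξ) := by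
    rw [Finset.union_insert, union_single]
  have ha' : a ∉ insert b s := by simp [hab, ha]
  simp only [union_pair, union_single, Ktr_add, Ktr_insert _ ha', Ktr_insert _ hb]
  ring

lemma Ktr_union_pair_sub (F : Finset α → ℝ) {s : Finset α} {a b a' b' : α} (ha : a ∉ s)
    (hb : b ∉ s) (hab : a ≠ b) (ha' : a' ∉ s) (hb' : b' ∉ s) (hab' : a' ≠ b') :
    Ktr F (s ∪ {a, b}) - Ktr F (s ∪ {a', b'}) =
      Ktr (fun ξ => (F (ξ ∪ {a, b}) - F (ξ ∪ {a', b'})) + (F (ξ ∪ {a}) - F (ξ ∪ {a'})) +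
        (F (ξ ∪ {b}) - F (ξ ∪ {b'}))) s := by
  rw [Ktr_union_pair F ha hb hab, Ktr_union_pair F ha' hb' hab', Ktr, Ktr, Ktr,
    ← Finset.sum_sub_distrib]
  exact Finset.sum_congr rfl fun ξ _ => by ring

lemma Kinv_congr {F F' : Finset α → ℝ} {s : Finset α} (h : ∀ γ ⊆ s, F γ = F' γ) :
    Kinv F s = Kinv F' s :=
  Finset.sum_congr rfl fun γ hγ => by rw [h γ (Finset.mem_powerset.1 hγ)]

lemma Kinv_add (F F' : Finset α → ℝ) (s : Finset α) :
    Kinv (fun γ => F γ + F' γ) s = Kinv F s + Kinv F' s := by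
  simp only [Kinv, mul_add, Finset.sum_add_distrib]

lemma Kinv_insert (F : Finset α → ℝ) {a : α} {s : Finset α} (ha : a ∉ s) :
    Kinv F (insert a s) = Kinv (fun γ => F (insert a γ)) s - Kinv F s := by
  unfold Kinv
  rw [Finset.sum_powerset_insert ha, add_comm, sub_eq_add_neg, ← Finset.sum_neg_distrib]
  congr 1 <;> refine Finset.sum_congr rfl fun γ hγ => ?_
  · rw [Finset.insert_sdiff_insert, Finset.sdiff_insert_of_notMem ha]
  · have haγ : a ∉ γ := Finset.notMem_mono (Finset.mem_powerset.1 hγ) ha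
    rw [Finset.insert_sdiff_of_notMem _ haγ, Finset.card_insert_of_notMem (by simp [ha]), pow_succ]
    ring

lemma Kinv_Ktr (G : Finset α → ℝ) (s : Finset α) : Kinv (Ktr G) s = G s := by
  induction s using Finset.induction_on generalizing G with
  | empty => simp [Kinv, Ktr]
  | insert a s ha ih =>
    calc Kinv (Ktr G) (insert a s)
        = Kinv (fun γ => Ktr G (insert a γ)) s - Kinv (Ktr G) s := Kinv_insert _ ha
      _ = Kinv (fun γ => Ktr G γ + Ktr (fun ξ => G (insert a ξ)) γ) s - Kinv (Ktr G) s := by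
          rw [Kinv_congr fun γ hγ => Ktr_insert G (Finset.notMem_mono hγ ha)]
      _ = G (insert a s) := by rw [Kinv_add, ih, ih, add_sub_cancel_left]

lemma sum_Ktr_erase (H : α → Finset α → ℝ) (γ : Finset α) :
    ∑ x ∈ γ, Ktr (H x) (γ.erase x) = Ktr (fun ξ => ∑ x ∈ ξ, H x (ξ.erase x)) γ := by
  unfold Ktr
  have erase_insert_eq {x : α} {ξ : Finset α} (hξ : ξ ⊆ γ.erase x) : (insert x ξ).erase x = ξ :=
    Finset.erase_insert (Finset.notMem_mono hξ (Finset.notMem_erase x γ))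
  rw [Finset.sum_sigma', Finset.sum_sigma']
  refine Finset.sum_bij' (fun p _ => ⟨insert p.1 p.2, p.1⟩) (fun q _ => ⟨q.2, q.1.erase q.2⟩)
    ?_ ?_ ?_ ?_ ?_ <;>
  · simp +contextual only [Finset.mem_sigma, Finset.mem_powerset, erase_insert_eq,
      Finset.insert_erase]
    grind

lemma sdiff_pair_eq_erase_erase (γ : Finset α) (x₁ x₂ : α) :
    γ \ {x₁, x₂} = (γ.erase x₁).erase x₂ := by
  grind

lemma sum_sum_Ktr_sdiff_pair (H : α → α → Finset α → ℝ) (γ : Finset α) :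
    ∑ x₁ ∈ γ, ∑ x₂ ∈ γ.erase x₁, Ktr (H x₁ x₂) (γ \ {x₁, x₂}) =
      Ktr (fun ξ => ∑ x₁ ∈ ξ, ∑ x₂ ∈ ξ.erase x₁, H x₁ x₂ (ξ \ {x₁, x₂})) γ := by
  simp only [sdiff_pair_eq_erase_erase, sum_Ktr_erase,
    sum_Ktr_erase fun x₁ ξ => ∑ x₂ ∈ ξ, H x₁ x₂ (ξ.erase x₂)]

end KTransform

lemma sum_sum_erase_comm {α M : Type*} [DecidableEq α] [AddCommMonoid M] (f : α → α → M)
    (s : Finset α) :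
    ∑ x ∈ s, ∑ y ∈ s.erase x, f x y = ∑ y ∈ s, ∑ x ∈ s.erase y, f x y :=
  Finset.sum_comm' fun x y => by grind

section ProductMeasure

variable {α : Type*} [MeasurableSpace α]

lemma ae_notMem_finset (μ : Measure α) [NullSingletonClass μ] (s : Finset α) :
    ∀ᵐ x ∂μ, x ∉ s :=
  measure_eq_zero_iff_ae_notMem.1 (s.measure_zero μ)

lemma ae_prod_fst_ne_snd [MeasurableEq α] (μ ν : Measure α) [SFinite ν] [NullSingletonClass ν] :
    ∀ᵐ y ∂μ.prod ν, y.1 ≠ y.2 := by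
  refine (Measure.ae_prod_iff_ae_ae measurableSet_diagonal.compl).2 (.of_forall fun x => ?_)
  filter_upwards [ae_notMem_finset ν {x}] with y hy
  simpa [eq_comm] using hy

lemma integrable_mul_sub_const {μ : Measure α} {k f : α → ℝ} (hk : Integrable k μ)
    (hkf : Integrable (fun y => k y * f y) μ) (r : ℝ) :
    Integrable (fun y => k y * (f y - r)) μ := by
  simp only [mul_sub]
  exact hkf.sub (hk.mul_const r)

variable {β : Type*} [MeasurableSpace β]

/-- The marginal `y ↦ ∫ k (y, z) dν(z)` of a rate `k` of pairs in its first variable; it turns the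
rate `c` into `c̃`. The marginal in the second variable is that of `k ∘ Prod.swap`. -/
def fstMarginal (ν : Measure β) (k : α × β → ℝ) (y : α) : ℝ :=
  ∫ z, k (y, z) ∂ν

variable {μ : Measure α} {ν : Measure β} [SFinite μ] [SFinite ν] {k : α × β → ℝ}

lemma integral_mul_comp_fst {g : α → ℝ} (h : Integrable (fun y => k y * g y.1) (μ.prod ν)) :
    ∫ y, k y * g y.1 ∂μ.prod ν = ∫ y, fstMarginal ν k y * g y ∂μ := by
  simp only [integral_prod _ h, integral_mul_const, fstMarginal]

lemma integral_mul_comp_snd {g : β → ℝ} (h : Integrable (fun y => k y * g y.2) (μ.prod ν)) :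
    ∫ y, k y * g y.2 ∂μ.prod ν = ∫ y, fstMarginal μ (k ∘ Prod.swap) y * g y ∂ν := by
  rw [← integral_prod_swap]
  exact integral_mul_comp_fst h.swap

end ProductMeasure

section Jumps

variable {α : Type*} [DecidableEq α] [MeasurableSpace α] (μ : Measure α)

/-- The total increment of `F` over the jumps of a pair `{x₁, x₂}`, in the presence of a
configuration `ξ`, to a pair `{y₁, y₂}` with rate `k (y₁, y₂)`. -/
def pairJump (k : α × α → ℝ) (F : Finset α → ℝ) (x₁ x₂ : α) (ξ : Finset α) : ℝ :=
  ∫ y, k y * (F (ξ ∪ {y.1, y.2}) - F (ξ ∪ {x₁, x₂})) ∂μ.prod μ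

/-- The total increment of `F` over the jumps of a point `x`, in the presence of a configuration
`ξ`, to a point `y` with rate `r y`. -/
def pointJump (r : α → ℝ) (F : Finset α → ℝ) (x : α) (ξ : Finset α) : ℝ :=
  ∫ y, r y * (F (ξ ∪ {y}) - F (ξ ∪ {x})) ∂μ

/-- The generator of binary jumps with rate `c x₁ x₂ (y₁, y₂)`, for particles living in a measure
space. The sum over unordered pairs is encoded as half the sum over ordered pairs. -/
def binaryJumpGenerator (c : α → α → α × α → ℝ) (F : Finset α → ℝ) (γ : Finset α) : ℝ :=
  (1 / 2 : ℝ) * ∑ x₁ ∈ γ, ∑ x₂ ∈ γ.erase x₁, pairJump μ (c x₁ x₂) F x₁ x₂ (γ \ {x₁, x₂})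

/-- The operator `W`: for each pair, the point `x₂` is removed and the point `x₁` jumps with the
marginal `c̃` of the pair rate. -/
def marginalJumpOperator (c : α → α → α × α → ℝ) (G : Finset α → ℝ) (η : Finset α) : ℝ :=
  ∑ x₂ ∈ η, ∑ x₁ ∈ η.erase x₂,
    pointJump μ (fstMarginal μ (c x₁ x₂)) G x₁ (η \ {x₁, x₂})

/-- Integrability of the rate `k` alone and against the values that `G` takes after one or both
points of a pair have jumped in the presence of a subconfiguration of `δ`. -/
structure IntegrablePairJump (k : α × α → ℝ) (G : Finset α → ℝ) (δ : Finset α) : Prop where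
  rate : Integrable k (μ.prod μ)
  fst : ∀ ξ ⊆ δ, Integrable (fun y => k y * G (ξ ∪ {y.1})) (μ.prod μ)
  snd : ∀ ξ ⊆ δ, Integrable (fun y => k y * G (ξ ∪ {y.2})) (μ.prod μ)
  pair : ∀ ξ ⊆ δ, Integrable (fun y => k y * G (ξ ∪ {y.1, y.2})) (μ.prod μ)

variable {μ} {k : α × α → ℝ} {G : Finset α → ℝ} {δ δ' : Finset α}

lemma IntegrablePairJump.mono (h : IntegrablePairJump μ k G δ') (hδ : δ ⊆ δ') :
    IntegrablePairJump μ k G δ where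
  rate := h.rate
  fst ξ hξ := h.fst ξ (hξ.trans hδ)
  snd ξ hξ := h.snd ξ (hξ.trans hδ)
  pair ξ hξ := h.pair ξ (hξ.trans hδ)

lemma IntegrablePairJump.of_forall_subset
    (h : ∀ ξ ⊆ δ, Integrable (fun y => k y * G (ξ ∪ {y.1})) (μ.prod μ) ∧
      Integrable (fun y => k y * G (ξ ∪ {y.2})) (μ.prod μ) ∧
      Integrable (fun y => k y * G (ξ ∪ {y.1, y.2})) (μ.prod μ) ∧ Integrable k (μ.prod μ)) :
    IntegrablePairJump μ k G δ where
  rate := (h δ subset_rfl).2.2.2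
  fst ξ hξ := (h ξ hξ).1
  snd ξ hξ := (h ξ hξ).2.1
  pair ξ hξ := (h ξ hξ).2.2.1

variable [MeasurableEq α] [SFinite μ] [NullSingletonClass μ]

lemma ae_Ktr_union_pair_sub (G : Finset α → ℝ) {x₁ x₂ : α} (hx₁ : x₁ ∉ δ) (hx₂ : x₂ ∉ δ)
    (hne : x₁ ≠ x₂) :
    ∀ᵐ y ∂μ.prod μ, Ktr G (δ ∪ {y.1, y.2}) - Ktr G (δ ∪ {x₁, x₂}) =
      Ktr (fun ξ => (G (ξ ∪ {y.1, y.2}) - G (ξ ∪ {x₁, x₂})) + (G (ξ ∪ {y.1}) - G (ξ ∪ {x₁})) +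
        (G (ξ ∪ {y.2}) - G (ξ ∪ {x₂}))) δ := by
  filter_upwards [Measure.quasiMeasurePreserving_fst.ae (ae_notMem_finset μ δ),
    Measure.quasiMeasurePreserving_snd.ae (ae_notMem_finset μ δ), ae_prod_fst_ne_snd μ μ]
    with y hy₁ hy₂ hy using Ktr_union_pair_sub G hy₁ hy₂ hy hx₁ hx₂ hne

lemma pairJump_Ktr (h : IntegrablePairJump μ k G δ) {x₁ x₂ : α} (hx₁ : x₁ ∉ δ) (hx₂ : x₂ ∉ δ)
    (hne : x₁ ≠ x₂) :
    pairJump μ k (Ktr G) x₁ x₂ δ =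
      Ktr (fun ξ => pairJump μ k G x₁ x₂ ξ + pointJump μ (fstMarginal μ k) G x₁ ξ +
        pointJump μ (fstMarginal μ (k ∘ Prod.swap)) G x₂ ξ) δ := by
  let pairInc (ξ : Finset α) (y : α × α) : ℝ := k y * (G (ξ ∪ {y.1, y.2}) - G (ξ ∪ {x₁, x₂}))
  let fstInc (ξ : Finset α) (y : α × α) : ℝ := k y * (G (ξ ∪ {y.1}) - G (ξ ∪ {x₁}))
  let sndInc (ξ : Finset α) (y : α × α) : ℝ := k y * (G (ξ ∪ {y.2}) - G (ξ ∪ {x₂}))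
  have increment_ae : ∀ᵐ y ∂μ.prod μ, k y * (Ktr G (δ ∪ {y.1, y.2}) - Ktr G (δ ∪ {x₁, x₂})) =
      ∑ ξ ∈ δ.powerset, (pairInc ξ + fstInc ξ + sndInc ξ) y := by
    filter_upwards [ae_Ktr_union_pair_sub G hx₁ hx₂ hne] with y hy
    rw [hy]
    simp only [Ktr, Finset.mul_sum, mul_add, Pi.add_apply, pairInc, fstInc, sndInc]
  have integrable_pairInc (ξ) (hξ : ξ ∈ δ.powerset) : Integrable (pairInc ξ) (μ.prod μ) :=
    integrable_mul_sub_const h.rate (h.pair ξ (Finset.mem_powerset.1 hξ)) _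
  have integrable_fstInc (ξ) (hξ : ξ ∈ δ.powerset) : Integrable (fstInc ξ) (μ.prod μ) :=
    integrable_mul_sub_const h.rate (h.fst ξ (Finset.mem_powerset.1 hξ)) _
  have integrable_sndInc (ξ) (hξ : ξ ∈ δ.powerset) : Integrable (sndInc ξ) (μ.prod μ) :=
    integrable_mul_sub_const h.rate (h.snd ξ (Finset.mem_powerset.1 hξ)) _
  rw [pairJump, integral_congr_ae increment_ae, integral_finsetSum _ fun ξ hξ =>
    ((integrable_pairInc ξ hξ).add (integrable_fstInc ξ hξ)).add (integrable_sndInc ξ hξ)]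
  refine Finset.sum_congr rfl fun ξ hξ => ?_
  rw [integral_add' ((integrable_pairInc ξ hξ).add (integrable_fstInc ξ hξ))
      (integrable_sndInc ξ hξ), integral_add' (integrable_pairInc ξ hξ) (integrable_fstInc ξ hξ)]
  exact congrArg₂ _
    (congrArg _ (integral_mul_comp_fst (g := fun y => G (ξ ∪ {y}) - _) (integrable_fstInc ξ hξ)))
    (integral_mul_comp_snd (g := fun y => G (ξ ∪ {y}) - _) (integrable_sndInc ξ hξ))

lemma binaryJumpGenerator_Ktr {c : α → α → α × α → ℝ}
    (hc : ∀ x₁ x₂, c x₁ x₂ ∘ Prod.swap = c x₂ x₁) {γ : Finset α}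
    (h : ∀ x₁ ∈ γ, ∀ x₂ ∈ γ, x₁ ≠ x₂ → IntegrablePairJump μ (c x₁ x₂) G (γ \ {x₁, x₂})) :
    binaryJumpGenerator μ c (Ktr G) γ =
      Ktr (fun ξ => binaryJumpGenerator μ c G ξ + marginalJumpOperator μ c G ξ) γ := by
  let P (x₁ x₂ : α) (ξ : Finset α) : ℝ := pairJump μ (c x₁ x₂) G x₁ x₂ ξ
  let Q (x₁ x₂ : α) (ξ : Finset α) : ℝ := pointJump μ (fstMarginal μ (c x₁ x₂)) G x₁ ξ
  have symmetrize (ξ : Finset α) :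
      (1 / 2 : ℝ) * ∑ x₁ ∈ ξ, ∑ x₂ ∈ ξ.erase x₁, (P x₁ x₂ (ξ \ {x₁, x₂}) +
        Q x₁ x₂ (ξ \ {x₁, x₂}) + Q x₂ x₁ (ξ \ {x₁, x₂})) =
      binaryJumpGenerator μ c G ξ + marginalJumpOperator μ c G ξ := by
    simp only [Finset.sum_add_distrib]
    rw [sum_sum_erase_comm fun x₁ x₂ => Q x₁ x₂ (ξ \ {x₁, x₂})]
    simp only [Finset.pair_comm, binaryJumpGenerator, marginalJumpOperator, P, Q]
    ring
  calc binaryJumpGenerator μ c (Ktr G) γ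
      = (1 / 2 : ℝ) * ∑ x₁ ∈ γ, ∑ x₂ ∈ γ.erase x₁,
          Ktr (fun ξ => P x₁ x₂ ξ + Q x₁ x₂ ξ + Q x₂ x₁ ξ) (γ \ {x₁, x₂}) := by
        refine congrArg _ (Finset.sum_congr rfl fun x₁ h₁ => Finset.sum_congr rfl fun x₂ h₂ => ?_)
        obtain ⟨hne, h₂⟩ := Finset.mem_erase.1 h₂
        rw [pairJump_Ktr (h x₁ h₁ x₂ h₂ hne.symm) (by simp) (by simp) hne.symm, hc]
    _ = Ktr (fun ξ => binaryJumpGenerator μ c G ξ + marginalJumpOperator μ c G ξ) γ := by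
        rw [sum_sum_Ktr_sdiff_pair, ← Ktr_const_mul]
        simp only [symmetrize]

theorem statement18_general {c : α → α → α × α → ℝ}
    (hc : ∀ x₁ x₂, c x₁ x₂ ∘ Prod.swap = c x₂ x₁) {η : Finset α}
    (h : ∀ x₁ ∈ η, ∀ x₂ ∈ η, x₁ ≠ x₂ → IntegrablePairJump μ (c x₁ x₂) G (η \ {x₁, x₂})) :
    Kinv (binaryJumpGenerator μ c (Ktr G)) η =
      binaryJumpGenerator μ c G η + marginalJumpOperator μ c G η := by
  rw [Kinv_congr fun γ hγ => binaryJumpGenerator_Ktr hc fun x₁ h₁ x₂ h₂ hne =>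
    (h x₁ (hγ h₁) x₂ (hγ h₂) hne).mono (Finset.sdiff_subset_sdiff hγ subset_rfl), Kinv_Ktr]

end Jumps

lemma Lgen_eq_binaryJumpGenerator (d : ℕ) (c : Rd d → Rd d → Rd d → Rd d → ℝ) :
    Lgen d c = binaryJumpGenerator volume fun x₁ x₂ => Function.uncurry (c x₁ x₂) := by
  funext F γ
  refine congrArg _ (Finset.sum_congr rfl fun x₁ h₁ => Finset.sum_congr rfl fun x₂ h₂ => ?_)
  have hγ : γ \ {x₁, x₂} ∪ {x₁, x₂} = γ :=
    Finset.sdiff_union_of_subset (by grind)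
  rw [pairJump, hγ]
  rfl

lemma Wgen_eq_marginalJumpOperator (d : ℕ) (c : Rd d → Rd d → Rd d → Rd d → ℝ) :
    Wgen d c = marginalJumpOperator volume fun x₁ x₂ => Function.uncurry (c x₁ x₂) := by
  funext G η
  refine Finset.sum_congr rfl fun x₂ _ => Finset.sum_congr rfl fun x₁ h₁ => ?_
  have sdiff_eq : (η \ {x₂}) \ {x₁} = η \ {x₁, x₂} := by grind
  have restore_x₁ : η \ {x₁, x₂} ∪ {x₁} = η \ {x₂} := by grind
  rw [pointJump, sdiff_eq, restore_x₁]
  rfl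

/-- The image of the binary-jump generator under the K-transform:
`(K⁻¹ L K G)(η) = (L₀G)(η) + (WG)(η)`. -/
theorem statement18
    (d : ℕ) (hd : 1 ≤ d)
    (c : Rd d → Rd d → Rd d → Rd d → ℝ)
    (hc_meas : Measurable fun p : (Rd d × Rd d) × Rd d × Rd d => c p.1.1 p.1.2 p.2.1 p.2.2)
    (hc_nonneg : ∀ x₁ x₂ y₁ y₂, 0 ≤ c x₁ x₂ y₁ y₂)
    (hc_sym12 : ∀ x₁ x₂ y₁ y₂, c x₁ x₂ y₁ y₂ = c x₂ x₁ y₁ y₂)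
    (hc_sym34 : ∀ x₁ x₂ y₁ y₂, c x₁ x₂ y₁ y₂ = c x₁ x₂ y₂ y₁)
    (G : Finset (Rd d) → ℝ) (η : Finset (Rd d))
    -- integrability hypotheses
    (hint : ∀ ξ ∈ η.powerset, ∀ x₁ ∈ η, ∀ x₂ ∈ η, x₁ ≠ x₂ →
      Integrable (fun y : Rd d × Rd d => c x₁ x₂ y.1 y.2 * G (ξ ∪ {y.1})) ∧
      Integrable (fun y : Rd d × Rd d => c x₁ x₂ y.1 y.2 * G (ξ ∪ {y.2})) ∧
      Integrable (fun y : Rd d × Rd d => c x₁ x₂ y.1 y.2 * G (ξ ∪ {y.1, y.2})) ∧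
      Integrable (fun y : Rd d × Rd d => c x₁ x₂ y.1 y.2)) :
    Kinv (fun γ => Lgen d c (Ktr G) γ) η =
      Lgen d c G η + Wgen d c G η := by
  have : Nonempty (Fin d) := ⟨⟨0, hd⟩⟩
  rw [Lgen_eq_binaryJumpGenerator, Wgen_eq_marginalJumpOperator]
  exact statement18_general (c := fun x₁ x₂ => Function.uncurry (c x₁ x₂))
    (fun x₁ x₂ => funext fun y => (hc_sym12 ..).trans (hc_sym34 ..))
    fun x₁ h₁ x₂ h₂ hne => .of_forall_subset fun ξ hξ =>
      hint ξ (Finset.mem_powerset.2 (hξ.trans Finset.sdiff_subset)) x₁ h₁ x₂ h₂ hne
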